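/- Let p ∈ (1,2). For a > 0 let ψ(·,a) be the function associated with the unique solution f(·,a) of (|f'|^{p-2} f')' + f - |f'|^{p-1} = 0, f(0) = a, f'(0) = 0, via ψ(1-f(r,a)/a, a) = |f'(r,a)|^p/a^p. Then there exists a_* > 0 such that the set 𝒞 := { a > 0 : ψ(y,a)(1-y)^{-p} → 0 as y → 1 } equals the open interval (0, a_*); in particular 𝒞 is nonempty and a_* ∉ 𝒞. -/

import Mathlib

/-!
Put `V = |f'|^p` as a function of the height `x = f ∈ (0,a]`. Then `V(a) = 0` and, with
`k = p/(p-1)`, `V' = k (V^(1/k) - x)` (`IsSol.phaseCurve`). This is the equation for `ψ(·,a)` in the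
variable `x = a(1-y)`, and in this form it no longer depends on `a`; moreover
`ψ(y,a)(1-y)^(-p) = V(x) x^(-p)` (`tendsto_iff_decays`).

As `V ↦ V^(1/k)` is increasing, the difference of two solutions shrinks as `x` decreases
(`PhaseCurve.sq_sub_le`). Hence the curves are ordered by `a` (`PhaseCurve.le_of_le`) and depend
continuously on `a`, uniformly in `x` (`PhaseCurve.le_add`). Below some height `δ = δ(p)` the region
`V ≤ x^p` is a trap in which `V = o(x^p)` (`exists_trap`). Consequently `a ∈ 𝒞` exactly when the
curve satisfies `V(x) < x^p` at some small `x`; by comparison and continuous dependence this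
condition is inherited by smaller `a` and is open in `a`, and it holds for `a ≤ δ`. For large `a`,
two integrations of the equation show that `V` stays away from `0` at `x = 0`
(`exists_not_decays`), so `𝒞` is bounded and `a_* = sup 𝒞`.
-/

open Set Filter Topology

/-- The extinction "radius" `R = inf{r > 0 : f(r) = 0}`, as an extended real number
(`⊤` when `f` does not vanish on `(0,∞)`). -/
noncomputable def extTime (f : ℝ → ℝ) : EReal :=
  sInf {x : EReal | ∃ r : ℝ, 0 < r ∧ f r = 0 ∧ x = (r : EReal)}

/-- `f` solves `(|f'|^{p-2} f')' + f - |f'|^{p-1} = 0` on `(0,∞)` with `f(0)=a`, `f'(0)=0`;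
`fd` is the derivative of `f` and `gd` the derivative of `|f'|^{p-2} f'`, both continuous
on `[0,∞)`, so that `f ∈ C¹([0,∞))` and `|f'|^{p-2} f' ∈ C¹([0,∞))`. -/
def IsSol (p a : ℝ) (f fd gd : ℝ → ℝ) : Prop :=
  (∀ r ∈ Set.Ici (0:ℝ), HasDerivWithinAt f (fd r) (Set.Ici 0) r) ∧
  ContinuousOn fd (Set.Ici 0) ∧
  (∀ r ∈ Set.Ici (0:ℝ), HasDerivWithinAt (fun s => |fd s| ^ (p-2) * fd s) (gd r) (Set.Ici 0) r) ∧
  ContinuousOn gd (Set.Ici 0) ∧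
  (∀ r ∈ Set.Ioi (0:ℝ), gd r + f r - |fd r| ^ (p-1) = 0) ∧
  f 0 = a ∧ fd 0 = 0

/-- `ψ` is the function associated with `f = f(·,a)` via `ψ(1 - f(r)/a) = |f'(r)|^p/a^p`
for `r ∈ [0,R(a))`. -/
def PsiRel (p a : ℝ) (f fd ψ : ℝ → ℝ) : Prop :=
  ∀ r : ℝ, 0 ≤ r → (r : EReal) < extTime f → ψ (1 - f r / a) = |fd r| ^ p / a ^ p

/-! ### The phase-plane equation -/

/-- `V` is a phase curve issued from `a`: the function `x ↦ |f'|^p` of the height `x = f` along a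
solution starting at height `a`. The equation does not involve `a`, so curves with different
starting heights are comparable. -/
structure PhaseCurve (p a : ℝ) (V : ℝ → ℝ) : Prop where
  zero : V a = 0
  nonneg : ∀ x ∈ Ioc 0 a, 0 ≤ V x
  cont : ContinuousOn V (Ioc 0 a)
  ode : ∀ x ∈ Ioo 0 a, HasDerivAt V (p / (p - 1) * (V x ^ ((p - 1) / p) - x)) x

/-- The curve reaches `x = 0` with `V(x) = o(x^p)`, that is `|f'| = o(f)`. -/
def Decays (p : ℝ) (V : ℝ → ℝ) : Prop :=
  Tendsto (fun x => V x * x ^ (-p)) (𝓝[>] (0 : ℝ)) (𝓝 0)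

/-- Since `V ↦ V^((p-1)/p)` is increasing, the squared difference of two phase curves is
nondecreasing in `x`. -/
lemma PhaseCurve.sq_sub_le {p a b : ℝ} (hp : 1 < p) {V W : ℝ → ℝ}
    (hV : PhaseCurve p a V) (hW : PhaseCurve p b W)
    {x y : ℝ} (hx : 0 < x) (hxy : x ≤ y) (hya : y ≤ a) (hyb : y ≤ b) :
    (W x - V x) ^ 2 ≤ (W y - V y) ^ 2 := by
  have hk : 0 ≤ p / (p - 1) := div_nonneg (by linarith) (by linarith)
  have hq : 0 ≤ (p - 1) / p := div_nonneg (by linarith) (by linarith)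
  have hmono : MonotoneOn (fun z => (W z - V z) ^ 2) (Icc x y) := by
    have hder : ∀ z ∈ interior (Icc x y), HasDerivAt (fun z => (W z - V z) ^ 2)
        (2 * (W z - V z) * (p / (p - 1) * (W z ^ ((p - 1) / p) - V z ^ ((p - 1) / p)))) z := by
      intro z hz
      rw [interior_Icc] at hz
      have h1 := hV.ode z ⟨hx.trans hz.1, hz.2.trans_le hya⟩
      have h2 := hW.ode z ⟨hx.trans hz.1, hz.2.trans_le hyb⟩
      refine ((h2.sub h1).pow 2).congr_deriv ?_
      simp only [Pi.sub_apply]; push_cast; ring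
    apply monotoneOn_of_deriv_nonneg (convex_Icc x y)
    · exact ((hW.cont.mono fun z hz => ⟨hx.trans_le hz.1, hz.2.trans hyb⟩).sub
        (hV.cont.mono fun z hz => ⟨hx.trans_le hz.1, hz.2.trans hya⟩)).pow 2
    · intro z hz
      exact (hder z hz).differentiableAt.differentiableWithinAt
    · intro z hz
      rw [(hder z hz).deriv]
      rw [interior_Icc] at hz
      have hz0 := hx.trans hz.1
      have v0 := hV.nonneg z ⟨hz0, (hz.2.trans_le hya).le⟩
      have w0 := hW.nonneg z ⟨hz0, (hz.2.trans_le hyb).le⟩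
      rcases le_total (V z) (W z) with h | h
      · have := Real.rpow_le_rpow v0 h hq
        exact mul_nonneg (by linarith) (mul_nonneg hk (by linarith))
      · have := Real.rpow_le_rpow w0 h hq
        exact mul_nonneg_of_nonpos_of_nonpos (by linarith)
          (mul_nonpos_of_nonneg_of_nonpos hk (by linarith))
  exact hmono (left_mem_Icc.2 hxy) (right_mem_Icc.2 hxy) hxy

/-- Phase curves are ordered by their starting heights. -/
lemma PhaseCurve.le_of_le {p a b : ℝ} (hp : 1 < p) {V W : ℝ → ℝ}
    (hV : PhaseCurve p a V) (hW : PhaseCurve p b W) (hab : a ≤ b)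
    {x : ℝ} (hx : 0 < x) (hxa : x ≤ a) : V x ≤ W x := by
  by_contra! hlt
  have ha : 0 ≤ W a - V a := by
    rw [hV.zero, sub_zero]; exact hW.nonneg a ⟨hx.trans_le hxa, hab⟩
  have hc : ContinuousOn (fun z => W z - V z) (Icc x a) :=
    (hW.cont.mono fun z hz => ⟨hx.trans_le hz.1, hz.2.trans hab⟩).sub
      (hV.cont.mono fun z hz => ⟨hx.trans_le hz.1, hz.2⟩)
  obtain ⟨z, hz, hz0⟩ := intermediate_value_Icc hxa hc ⟨by linarith, ha⟩
  have := hV.sq_sub_le hp hW hx hz.1 hz.2 (hz.2.trans hab)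
  simp only at hz0
  rw [hz0] at this
  nlinarith

/-- Continuous dependence of phase curves on the starting height. -/
lemma PhaseCurve.le_add {p a b : ℝ} (hp : 1 < p) {V W : ℝ → ℝ}
    (hV : PhaseCurve p a V) (hW : PhaseCurve p b W) (hab : a ≤ b)
    {x : ℝ} (hx : 0 < x) (hxa : x ≤ a) : W x ≤ V x + W a := by
  have h := hV.sq_sub_le hp hW hx hxa le_rfl hab
  rw [hV.zero, sub_zero] at h
  have := abs_le_of_sq_le_sq' h (hW.nonneg a ⟨hx.trans_le hxa, hab⟩)
  linarith [this.2]

lemma PhaseCurve.upper {p a : ℝ} (hp : 1 < p) {V : ℝ → ℝ} (hV : PhaseCurve p a V)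
    {x : ℝ} (hx : 0 < x) (hxa : x ≤ a) : V x ≤ p / (p - 1) * (a ^ 2 - x ^ 2) / 2 := by
  have hk : 0 ≤ p / (p - 1) := div_nonneg (by linarith) (by linarith)
  have hder : ∀ z ∈ interior (Ioc 0 a), HasDerivAt (fun z => V z + p / (p - 1) * z ^ 2 / 2)
      (p / (p - 1) * V z ^ ((p - 1) / p)) z := by
    intro z hz
    rw [interior_Ioc] at hz
    refine ((hV.ode z hz).add
      ((((hasDerivAt_id z).pow 2).const_mul (p / (p - 1))).div_const 2)).congr_deriv ?_
    simp only [id]; push_cast; ring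
  have hm : MonotoneOn (fun z => V z + p / (p - 1) * z ^ 2 / 2) (Ioc 0 a) := by
    apply monotoneOn_of_deriv_nonneg (convex_Ioc 0 a)
    · exact hV.cont.add (by fun_prop)
    · intro z hz
      exact (hder z hz).differentiableAt.differentiableWithinAt
    · intro z hz
      rw [(hder z hz).deriv]
      rw [interior_Ioc] at hz
      exact mul_nonneg hk (Real.rpow_nonneg (hV.nonneg z ⟨hz.1, hz.2.le⟩) _)
  have := hm ⟨hx, hxa⟩ ⟨hx.trans_le hxa, le_rfl⟩ hxa
  simp only [hV.zero] at this
  linarith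

/-- Inserting the upper bound for `V` in the equation and integrating once more. -/
lemma PhaseCurve.lower {p a : ℝ} (hp : 1 < p) {V : ℝ → ℝ} (hV : PhaseCurve p a V)
    {x : ℝ} (hx : 0 < x) (hxa : x ≤ a) :
    p / (p - 1) * ((a ^ 2 - x ^ 2) / 2
      - (p / (p - 1) * a ^ 2 / 2) ^ ((p - 1) / p) * (a - x)) ≤ V x := by
  have hk : 0 ≤ p / (p - 1) := div_nonneg (by linarith) (by linarith)
  have hq : 0 ≤ (p - 1) / p := div_nonneg (by linarith) (by linarith)
  set C := (p / (p - 1) * a ^ 2 / 2) ^ ((p - 1) / p) with hC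
  have hder : ∀ z ∈ interior (Ioc 0 a), HasDerivAt
      (fun z => V z + p / (p - 1) * (z ^ 2 / 2 - C * z))
      (p / (p - 1) * (V z ^ ((p - 1) / p) - C)) z := by
    intro z hz
    rw [interior_Ioc] at hz
    refine ((hV.ode z hz).add (((((hasDerivAt_id z).pow 2).div_const 2).sub
      ((hasDerivAt_id z).const_mul C)).const_mul (p / (p - 1)))).congr_deriv ?_
    simp only [id]; push_cast; ring
  have hm : AntitoneOn (fun z => V z + p / (p - 1) * (z ^ 2 / 2 - C * z)) (Ioc 0 a) := by
    apply antitoneOn_of_deriv_nonpos (convex_Ioc 0 a)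
    · exact hV.cont.add (by fun_prop)
    · intro z hz
      exact (hder z hz).differentiableAt.differentiableWithinAt
    · intro z hz
      rw [(hder z hz).deriv]
      rw [interior_Ioc] at hz
      apply mul_nonpos_of_nonneg_of_nonpos hk
      have h1 := hV.upper hp hz.1 hz.2.le
      have h2 : V z ≤ p / (p - 1) * a ^ 2 / 2 := by nlinarith [mul_nonneg hk (sq_nonneg z)]
      have := Real.rpow_le_rpow (hV.nonneg z ⟨hz.1, hz.2.le⟩) h2 hq
      linarith
  have := hm ⟨hx, hxa⟩ ⟨hx.trans_le hxa, le_rfl⟩ hxa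
  simp only [hV.zero] at this
  linarith

/-! ### The trap near the origin -/

/-- Below a height depending only on `p`, the region `V ≤ x^p` is a trap, and curves in it decay:
with `ε = (2-p)/2`, a multiple of `x^(p+ε)` is an upper barrier. -/
lemma exists_trap {p : ℝ} (hp : p ∈ Ioo (1 : ℝ) 2) :
    ∃ δ : ℝ, 0 < δ ∧ ∀ (a : ℝ) (V : ℝ → ℝ), PhaseCurve p a V →
      ∀ x₁, 0 < x₁ → x₁ < δ → x₁ < a → V x₁ ≤ x₁ ^ p → Decays p V := by
  obtain ⟨hp1, hp2⟩ := hp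
  have hp10 : 0 < p - 1 := by linarith
  obtain ⟨k, hkdef⟩ : ∃ k, k = p / (p - 1) := ⟨_, rfl⟩
  obtain ⟨ε, hε⟩ : ∃ ε, ε = (2 - p) / 2 := ⟨_, rfl⟩
  have hε0 : 0 < ε := by rw [hε]; linarith
  have hk0 : 0 < k := by rw [hkdef]; exact div_pos (by linarith) hp10
  have hkp : 0 < k - p - ε := by
    have : k - p = p * (2 - p) / (p - 1) := by rw [hkdef]; field_simp; ring
    have h2 : (2 - p) ≤ p * (2 - p) / (p - 1) := by
      rw [le_div_iff₀ hp10]; nlinarith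
    rw [hε]; linarith
  have hη : 0 < (k - p - ε) / k := div_pos hkp hk0
  refine ⟨((k - p - ε) / k) ^ (1 / (2 - p)), Real.rpow_pos_of_pos hη _, ?_⟩
  intro a V hV x₁ hx₁ hδ hx₁a hle
  have hx₁η : x₁ ^ (2 - p) < (k - p - ε) / k := by
    have := Real.rpow_lt_rpow hx₁.le hδ (show 0 < 2 - p by linarith)
    rwa [← Real.rpow_mul hη.le, one_div_mul_cancel (by linarith), Real.rpow_one] at this
  set M := x₁ ^ (-ε) with hM
  have hM0 : 0 < M := Real.rpow_pos_of_pos hx₁ _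
  have key : ∀ x ∈ Ioc 0 x₁, V x ≤ M * x ^ (p + ε) := by
    intro x hx
    -- the barrier argument runs towards decreasing `x`
    have hb := image_le_of_deriv_right_lt_deriv_boundary' (f := fun t => V (-t))
      (f' := fun t => -(k * (V (-t) ^ ((p - 1) / p) - (-t))))
      (B := fun t => M * (-t) ^ (p + ε)) (B' := fun t => -(M * ((p + ε) * (-t) ^ (p + ε - 1))))
      (a := -x₁) (b := -x) ?_ ?_ ?_ ?_ ?_ ?_
    · have := hb (x := -x) ⟨by linarith [hx.2], le_rfl⟩
      simpa using this
    · apply hV.cont.comp continuousOn_neg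
      intro t ht
      exact ⟨by linarith [ht.2, hx.1], by linarith [ht.1]⟩
    · intro t ht
      have h := hV.ode (-t) ⟨by linarith [ht.2, hx.1], by linarith [ht.1]⟩
      have h2 := h.comp t (hasDerivAt_neg t)
      rw [← hkdef] at h2
      refine (h2.congr_deriv ?_).hasDerivWithinAt
      ring
    · simp only [neg_neg]
      refine hle.trans (le_of_eq ?_)
      rw [hM, ← Real.rpow_add hx₁]; congr 1; ring
    · apply ContinuousOn.mul continuousOn_const
      apply ContinuousOn.rpow_const (by fun_prop)
      intro t ht; right; linarith
    · intro t ht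
      have h := (Real.hasDerivAt_rpow_const (x := -t) (p := p + ε)
        (Or.inl (by linarith [ht.2, hx.1] : 0 < -t).ne')).comp t (hasDerivAt_neg t)
      refine ((h.const_mul M).congr_deriv ?_).hasDerivWithinAt
      ring
    · intro t ht heq
      obtain ⟨z, rfl⟩ : ∃ z, t = -z := ⟨-t, by ring⟩
      simp only [neg_neg] at heq ⊢
      have hz : 0 < z := by linarith [ht.2, hx.1]
      have hz1 : z ≤ x₁ := by linarith [ht.1]
      set B := V z with hB
      have hB0 : 0 < B := by rw [heq]; exact mul_pos hM0 (Real.rpow_pos_of_pos hz _)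
      have hMz : M * z ^ ε ≤ 1 := by
        have := Real.rpow_le_rpow hz.le hz1 hε0.le
        calc M * z ^ ε ≤ M * x₁ ^ ε := by gcongr
          _ = 1 := by rw [hM, ← Real.rpow_add hx₁]; simp
      have hBzp : B ≤ z ^ p := by
        rw [heq, Real.rpow_add hz]
        calc M * (z ^ p * z ^ ε) = (M * z ^ ε) * z ^ p := by ring
          _ ≤ 1 * z ^ p := by gcongr
          _ = z ^ p := one_mul _
      have hBq : B ≤ z * B ^ ((p - 1) / p) := by
        have h1 : B ^ (1 / p) ≤ z := by
          have := Real.rpow_le_rpow hB0.le hBzp (show 0 ≤ 1 / p by positivity)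
          rwa [← Real.rpow_mul hz.le, mul_one_div_cancel (by linarith), Real.rpow_one] at this
        calc B = B ^ (1 / p) * B ^ ((p - 1) / p) := by
              rw [← Real.rpow_add hB0]
              rw [show 1 / p + (p - 1) / p = 1 by field_simp; ring, Real.rpow_one]
          _ ≤ z * B ^ ((p - 1) / p) := by gcongr
      have hBd : z * (M * ((p + ε) * z ^ (p + ε - 1))) = (p + ε) * B := by
        rw [heq, Real.rpow_sub_one hz.ne']; field_simp
      have hBz : z ^ 2 < (k - p - ε) / k * B := by
        have h1 : M ≤ z ^ (-ε) := Real.rpow_le_rpow_of_nonpos hz hz1 (by linarith)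
        have h2 : 1 < (k - p - ε) / k * (M * M) := by
          have : M * M = (x₁ ^ (2 - p))⁻¹ := by
            rw [hM, ← Real.rpow_add hx₁, ← Real.rpow_neg hx₁.le]; congr 1; rw [hε]; ring
          rw [this, ← div_eq_mul_inv, one_lt_div (Real.rpow_pos_of_pos hx₁ _)]
          exact hx₁η
        have h3 : z ^ (p + ε) = z ^ 2 * z ^ (-ε) := by
          rw [← Real.rpow_natCast z 2, ← Real.rpow_add hz]; congr 1; rw [hε]; push_cast; ring
        rw [heq, h3]
        calc z ^ 2 = z ^ 2 * 1 := (mul_one _).symm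
          _ < z ^ 2 * ((k - p - ε) / k * (M * M)) := by gcongr
          _ ≤ z ^ 2 * ((k - p - ε) / k * (M * z ^ (-ε))) := by gcongr
          _ = _ := by ring
      have hBz' : k * z ^ 2 < (k - p - ε) * B := by
        rw [div_mul_eq_mul_div, lt_div_iff₀ hk0] at hBz; linarith
      rw [neg_lt_neg_iff]
      apply lt_of_mul_lt_mul_left _ hz.le
      rw [hBd]
      nlinarith [mul_le_mul_of_nonneg_left hBq hk0.le]
  have hlim : Tendsto (fun x : ℝ => M * x ^ ε) (𝓝[>] (0 : ℝ)) (𝓝 0) := by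
    have h : ContinuousAt (fun x : ℝ => M * x ^ ε) 0 :=
      continuousAt_const.mul (Real.continuousAt_rpow_const 0 ε (Or.inr hε0.le))
    have h' := h.tendsto.mono_left (nhdsWithin_le_nhds (s := Ioi 0))
    simpa [Real.zero_rpow hε0.ne'] using h'
  refine tendsto_of_tendsto_of_tendsto_of_le_of_le' tendsto_const_nhds hlim ?_ ?_
  · filter_upwards [Ioc_mem_nhdsGT hx₁] with x hx
    exact mul_nonneg (hV.nonneg x ⟨hx.1, hx.2.trans hx₁a.le⟩) (Real.rpow_nonneg hx.1.le _)
  · filter_upwards [Ioc_mem_nhdsGT hx₁] with x hx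
    calc V x * x ^ (-p) ≤ M * x ^ (p + ε) * x ^ (-p) := by
          gcongr
          · exact Real.rpow_nonneg hx.1.le _
          · exact key x hx
      _ = M * x ^ ε := by
          rw [mul_assoc, ← Real.rpow_add hx.1]; congr 2; ring

/-! ### The set of decaying curves -/

lemma Decays.exists_le {p : ℝ} {V : ℝ → ℝ} (h : Decays p V) {c : ℝ} (hc : 0 < c) :
    ∃ x, 0 < x ∧ x < c ∧ V x < x ^ p := by
  have h1 : ∀ᶠ x in 𝓝[>] (0 : ℝ), V x * x ^ (-p) < 1 := h.eventually (gt_mem_nhds one_pos)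
  obtain ⟨x, hx1, hx⟩ := (h1.and (Ioo_mem_nhdsGT hc)).exists
  refine ⟨x, hx.1, hx.2, ?_⟩
  rwa [Real.rpow_neg hx.1.le, ← div_eq_mul_inv, div_lt_one (Real.rpow_pos_of_pos hx.1 _)] at hx1

/-- A curve enters `V ≤ x^p` immediately below its starting height, since `V(a) = 0`. -/
lemma PhaseCurve.exists_le_rpow {p a : ℝ} {V : ℝ → ℝ} (hV : PhaseCurve p a V)
    (ha : 0 < a) : ∃ x, 0 < x ∧ x < a ∧ V x ≤ x ^ p := by
  have hc : ContinuousWithinAt (fun x => x ^ p - V x) (Iio a) a := by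
    have h1 : ContinuousWithinAt V (Iio a) a :=
      (hV.cont a ⟨ha, le_rfl⟩).mono_of_mem_nhdsWithin
        (mem_of_superset (Ioo_mem_nhdsLT ha) Ioo_subset_Ioc_self)
    exact (Real.continuousAt_rpow_const a p (Or.inl ha.ne')).continuousWithinAt.sub h1
  have hpos : 0 < a ^ p - V a := by rw [hV.zero, sub_zero]; exact Real.rpow_pos_of_pos ha _
  have hev := hc.tendsto.eventually (lt_mem_nhds hpos)
  obtain ⟨x, hx1, hx⟩ := (hev.and (Ioo_mem_nhdsLT ha)).exists
  exact ⟨x, hx.1, hx.2, by linarith⟩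

/-- For large `a` the term `a²/2` in the lower bound dominates, because `2(p-1)/p < 1`; then `V`
stays away from `0` near `x = 0`. -/
lemma exists_not_decays {p : ℝ} (hp : p ∈ Ioo (1 : ℝ) 2) :
    ∃ a : ℝ, 0 < a ∧ ∀ V : ℝ → ℝ, PhaseCurve p a V → ¬ Decays p V := by
  obtain ⟨hp1, hp2⟩ := hp
  have hp10 : 0 < p - 1 := by linarith
  have hk : 0 < p / (p - 1) := div_pos (by linarith) hp10
  set q := (p - 1) / p with hq
  have hq2 : 0 < 1 - 2 * q := by
    have : q < 1 / 2 := by rw [hq, div_lt_div_iff₀ (by linarith) (by norm_num)]; linarith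
    linarith
  set C := (p / (p - 1) / 2) ^ q with hC
  have hlim := tendsto_rpow_atTop hq2
  obtain ⟨a, ha1, ha2⟩ := ((hlim.eventually (eventually_gt_atTop (4 * C))).and
    (eventually_gt_atTop (2 : ℝ))).exists
  have ha0 : 0 < a := by linarith
  refine ⟨a, ha0, fun V hV hd => ?_⟩
  have hCa : (p / (p - 1) * a ^ 2 / 2) ^ q = C * a ^ (2 * q) := by
    rw [show p / (p - 1) * a ^ 2 / 2 = p / (p - 1) / 2 * a ^ 2 by ring,
      Real.mul_rpow (by positivity) (by positivity), ← Real.rpow_natCast a 2,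
      ← Real.rpow_mul ha0.le, hC]
    norm_num
  have hD : 4 * ((p / (p - 1) * a ^ 2 / 2) ^ q) < a := by
    rw [hCa]
    have h1 : a ^ (1 - 2 * q) * a ^ (2 * q) = a := by
      rw [← Real.rpow_add ha0]; simp
    have h2 : 0 < a ^ (2 * q) := Real.rpow_pos_of_pos ha0 _
    nlinarith
  have hD0 : 0 ≤ (p / (p - 1) * a ^ 2 / 2) ^ q := by positivity
  have hc : 0 < p / (p - 1) * (a ^ 2 / 8) := by positivity
  have hev : ∀ᶠ x in 𝓝[>] (0 : ℝ), V x * x ^ (-p) < p / (p - 1) * (a ^ 2 / 8) :=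
    hd.eventually (gt_mem_nhds hc)
  obtain ⟨x, hx1, hx⟩ := (hev.and (Ioo_mem_nhdsGT one_pos)).exists
  have hxa : x ≤ a / 2 := by linarith [hx.2]
  have hlow := hV.lower hp1 hx.1 (by linarith)
  rw [← hq] at hlow
  set D := (p / (p - 1) * a ^ 2 / 2) ^ q
  have hVx : p / (p - 1) * (a ^ 2 / 8) ≤ V x := by
    refine le_trans (mul_le_mul_of_nonneg_left ?_ hk.le) hlow
    have h1 : D * (a - x) ≤ a / 4 * a := by
      apply mul_le_mul <;> linarith [hx.1]
    nlinarith [hx.1]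
  have hxp : 1 ≤ x ^ (-p) := Real.one_le_rpow_of_pos_of_le_one_of_nonpos hx.1 hx.2.le (by linarith)
  nlinarith [mul_le_mul hVx hxp zero_le_one (hc.le.trans hVx)]

/-- The starting heights of decaying phase curves form an initial open interval. -/
lemma decays_set_eq {p : ℝ} (hp : p ∈ Ioo (1 : ℝ) 2) {V : ℝ → ℝ → ℝ}
    (hV : ∀ a, 0 < a → PhaseCurve p a (V a)) :
    ∃ astar : ℝ, 0 < astar ∧ {a : ℝ | 0 < a ∧ Decays p (V a)} = Ioo 0 astar := by
  obtain ⟨δ, hδ, htrap⟩ := exists_trap hp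
  have hsmall : ∀ a, 0 < a → a ≤ δ → Decays p (V a) := by
    intro a ha haδ
    obtain ⟨x, hx0, hxa, hx⟩ := (hV a ha).exists_le_rpow ha
    exact htrap a _ (hV a ha) x hx0 (hxa.trans_le haδ) hxa hx
  have hdown : ∀ a b, 0 < a → a ≤ b → Decays p (V b) → Decays p (V a) := by
    intro a b ha hab hb
    obtain ⟨x, hx0, hxc, hx⟩ := hb.exists_le (lt_min hδ ha)
    have hxa := hxc.trans_le (min_le_right _ _)
    exact htrap a _ (hV a ha) x hx0 (hxc.trans_le (min_le_left _ _)) hxa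
      (((hV a ha).le_of_le hp.1 (hV b (ha.trans_le hab)) hab hx0 hxa.le).trans hx.le)
  have hopen : ∀ a, 0 < a → Decays p (V a) → ∃ b, a < b ∧ Decays p (V b) := by
    intro a ha hd
    obtain ⟨x, hx0, hxc, hx⟩ := hd.exists_le (lt_min hδ ha)
    have hxa := hxc.trans_le (min_le_right _ _)
    have hgap : 0 < x ^ p - V a x := by linarith
    have hcont : ContinuousAt (fun b : ℝ => p / (p - 1) * (b ^ 2 - a ^ 2) / 2) a := by fun_prop
    have hev : ∀ᶠ b in 𝓝[>] a, p / (p - 1) * (b ^ 2 - a ^ 2) / 2 < x ^ p - V a x :=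
      (hcont.tendsto.mono_left nhdsWithin_le_nhds).eventually (gt_mem_nhds (by simpa using hgap))
    obtain ⟨b, hb1, hab⟩ := (hev.and self_mem_nhdsWithin).exists
    have hab : a < b := hab
    have hb := hV b (ha.trans hab)
    have h1 := (hV a ha).le_add hp.1 hb hab.le hx0 hxa.le
    have h2 := hb.upper hp.1 ha hab.le
    exact ⟨b, hab, htrap b _ hb x hx0 (hxc.trans_le (min_le_left _ _)) (hxa.trans hab)
      (by linarith)⟩
  obtain ⟨A, hA, hnot⟩ := exists_not_decays hp
  have hbdd : BddAbove {a : ℝ | 0 < a ∧ Decays p (V a)} := by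
    refine ⟨A, fun a ha => ?_⟩
    by_contra! h
    exact hnot _ (hV A hA) (hdown A a hA h.le ha.2)
  have hδmem : δ ∈ {a : ℝ | 0 < a ∧ Decays p (V a)} := ⟨hδ, hsmall δ hδ le_rfl⟩
  refine ⟨sSup {a : ℝ | 0 < a ∧ Decays p (V a)}, hδ.trans_le (le_csSup hbdd hδmem), ?_⟩
  ext a
  constructor
  · rintro ⟨ha, hd⟩
    obtain ⟨b, hab, hb⟩ := hopen a ha hd
    exact ⟨ha, hab.trans_le (le_csSup hbdd ⟨ha.trans hab, hb⟩)⟩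
  · rintro ⟨ha, hlt⟩
    obtain ⟨b, hb, hab⟩ := exists_lt_of_lt_csSup ⟨δ, hδmem⟩ hlt
    exact ⟨ha, hdown a b ha hab.le hb.2⟩

/-! ### From solutions to phase curves -/

/-- `f` is positive on `[0,r]`; by `Good.lt_extTime` this puts `r` in `[0,R)`. -/
def Good (f : ℝ → ℝ) (r : ℝ) : Prop := 0 ≤ r ∧ ∀ s ∈ Icc 0 r, 0 < f s

lemma Good.mono {f : ℝ → ℝ} {r s : ℝ} (h : Good f r) (hs : 0 ≤ s) (hsr : s ≤ r) : Good f s :=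
  ⟨hs, fun t ht => h.2 t ⟨ht.1, ht.2.trans hsr⟩⟩

lemma Good.exists_gt {f : ℝ → ℝ} {r : ℝ} (hc : ContinuousOn f (Ici 0)) (h : Good f r) :
    ∃ η, 0 < η ∧ Good f (r + η) := by
  have hcr : ContinuousWithinAt f (Ici r) r :=
    (hc r h.1).mono (Ici_subset_Ici.2 h.1)
  have hev := hcr.tendsto.eventually (lt_mem_nhds (h.2 r ⟨h.1, le_rfl⟩))
  obtain ⟨u, hu, hsub⟩ := (mem_nhdsGE_iff_exists_Icc_subset).1 hev
  have hu : r < u := hu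
  refine ⟨u - r, by linarith, by linarith [h.1], fun s hs => ?_⟩
  rcases le_total s r with hsr | hsr
  · exact h.2 s ⟨hs.1, hsr⟩
  · exact hsub ⟨hsr, by linarith [hs.2]⟩

lemma Good.lt_extTime {f : ℝ → ℝ} {r : ℝ} (hc : ContinuousOn f (Ici 0)) (h : Good f r) :
    (r : EReal) < extTime f := by
  obtain ⟨η, hη, hg⟩ := h.exists_gt hc
  have h1 : ((r + η : ℝ) : EReal) ≤ extTime f := by
    apply le_sInf
    rintro x ⟨s, hs, hfs, rfl⟩
    rw [EReal.coe_le_coe_iff]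
    by_contra! hlt
    exact (hg.2 s ⟨hs.le, hlt.le⟩).ne' hfs
  exact lt_of_lt_of_le (by rw [EReal.coe_lt_coe_iff]; linarith) h1

section Solution

variable {p a : ℝ} {f fd gd : ℝ → ℝ}

lemma IsSol.contF (h : IsSol p a f fd gd) : ContinuousOn f (Ici 0) :=
  fun r hr => (h.1 r hr).continuousWithinAt

lemma abs_flux (hp : 1 < p) (x : ℝ) : |(|x| ^ (p - 2) * x)| = |x| ^ (p - 1) := by
  rcases eq_or_ne x 0 with rfl | hx
  · simp [Real.zero_rpow (show p - 1 ≠ 0 by linarith)]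
  · rw [abs_mul, abs_of_nonneg (Real.rpow_nonneg (abs_nonneg x) _),
      ← Real.rpow_add_one (abs_ne_zero.2 hx)]
    congr 1; ring

/-- The equation extends to `r = 0` by continuity. -/
lemma IsSol.eqn (hp : 1 < p) (h : IsSol p a f fd gd) {r : ℝ} (hr : 0 ≤ r) :
    gd r = |(|fd r| ^ (p - 2) * fd r)| - f r := by
  obtain ⟨-, hfd, -, hgd, heq, -, -⟩ := id h
  have hc : ContinuousOn (fun r => |fd r| ^ (p - 1) - f r) (Ici 0) :=
    (hfd.abs.rpow_const fun x _ => Or.inr (by linarith)).sub h.contF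
  have hE : EqOn gd (fun r => |fd r| ^ (p - 1) - f r) (Ioi 0) := fun s hs => by
    have := heq s hs
    simp only; linarith
  have := hE.of_subset_closure hgd hc Ioi_subset_Ici_self (by rw [closure_Ioi]) hr
  rw [abs_flux hp]; exact this

lemma IsSol.contG (h : IsSol p a f fd gd) :
    ContinuousOn (fun s => |fd s| ^ (p - 2) * fd s) (Ici 0) :=
  fun r hr => (h.2.2.1 r hr).continuousWithinAt

lemma IsSol.hasDerivAt (h : IsSol p a f fd gd) {r : ℝ} (hr : 0 < r) :
    HasDerivAt f (fd r) r := (h.1 r hr.le).hasDerivAt (Ici_mem_nhds hr)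

lemma IsSol.hasDerivAt_flux (h : IsSol p a f fd gd) {r : ℝ} (hr : 0 < r) :
    HasDerivAt (fun s => |fd s| ^ (p - 2) * fd s) (gd r) r :=
  (h.2.2.1 r hr.le).hasDerivAt (Ici_mem_nhds hr)

/-- The flux `g = |f'|^(p-2) f'` cannot cross `0` upwards where `f > 0`, since there `g' = -f < 0`. -/
lemma IsSol.flux_nonpos (hp : 1 < p) (h : IsSol p a f fd gd) {r : ℝ} (hr : Good f r) :
    |fd r| ^ (p - 2) * fd r ≤ 0 := by
  refine image_le_of_deriv_right_lt_deriv_boundary' (f := fun s => |fd s| ^ (p - 2) * fd s)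
    (f' := gd) (B := fun _ => 0) (B' := fun _ => 0) (a := 0) (b := r)
    (h.contG.mono Icc_subset_Ici_self) ?_ ?_ continuousOn_const ?_ ?_ ⟨hr.1, le_rfl⟩
  · intro x hx
    exact (h.2.2.1 x hx.1).mono (Ici_subset_Ici.2 hx.1)
  · simp [h.2.2.2.2.2.2]
  · intro x _
    exact hasDerivWithinAt_const _ _ _
  · intro x hx h0
    rw [h.eqn hp hx.1, h0, abs_zero]
    linarith [hr.2 x ⟨hx.1, hx.2.le⟩]

/-- Where the flux `g` is nonpositive the equation reads `(e^r g)' = -e^r f < 0`. -/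
lemma IsSol.flux_neg (hp : 1 < p) (h : IsSol p a f fd gd) {r : ℝ} (hr : Good f r) (h0 : 0 < r) :
    |fd r| ^ (p - 2) * fd r < 0 := by
  have hanti : StrictAntiOn (fun s => Real.exp s * (|fd s| ^ (p - 2) * fd s)) (Icc 0 r) := by
    apply strictAntiOn_of_deriv_neg (convex_Icc 0 r)
    · exact Real.continuous_exp.continuousOn.mul (h.contG.mono Icc_subset_Ici_self)
    · intro s hs
      rw [interior_Icc] at hs
      have hder : HasDerivAt (fun s => Real.exp s * (|fd s| ^ (p - 2) * fd s))
          (Real.exp s * (|fd s| ^ (p - 2) * fd s) + Real.exp s * gd s) s :=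
        (Real.hasDerivAt_exp s).mul (h.hasDerivAt_flux hs.1)
      rw [hder.deriv, h.eqn hp hs.1.le,
        abs_of_nonpos (h.flux_nonpos hp (hr.mono hs.1.le hs.2.le))]
      have := mul_pos (Real.exp_pos s) (hr.2 s ⟨hs.1.le, hs.2.le⟩)
      linarith
  have := hanti ⟨le_rfl, h0.le⟩ ⟨h0.le, le_rfl⟩ h0
  simp only [h.2.2.2.2.2.2, mul_zero] at this
  by_contra! hcon
  exact absurd this (not_lt.2 (mul_nonneg (Real.exp_pos r).le hcon))

lemma IsSol.fd_neg (hp : 1 < p) (h : IsSol p a f fd gd) {r : ℝ} (hr : Good f r) (h0 : 0 < r) :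
    fd r < 0 := by
  by_contra! hcon
  exact absurd (h.flux_neg hp hr h0)
    (not_lt.2 (mul_nonneg (Real.rpow_nonneg (abs_nonneg _) _) hcon))

lemma IsSol.strictAntiOn (hp : 1 < p) (h : IsSol p a f fd gd) {r : ℝ} (hr : Good f r) :
    StrictAntiOn f (Icc 0 r) := by
  apply strictAntiOn_of_deriv_neg (convex_Icc 0 r) (h.contF.mono Icc_subset_Ici_self)
  intro s hs
  rw [interior_Icc] at hs
  rw [(h.hasDerivAt hs.1).deriv]
  exact h.fd_neg hp (hr.mono hs.1.le hs.2.le) hs.1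

/-- `f` takes arbitrarily small values: if `f > x > 0` throughout, then the negative flux `-g` stays
above a positive constant, so `f` decreases at least linearly. -/
lemma IsSol.exists_le (hp : 1 < p) (h : IsSol p a f fd gd) {x : ℝ} (hx : 0 < x) :
    ∃ r, 0 ≤ r ∧ f r ≤ x := by
  by_contra! hcon
  have hg : ∀ r, 0 ≤ r → Good f r := fun r hr => ⟨hr, fun s hs => hx.trans (hcon s hs.1)⟩
  set c := min (-(|fd 1| ^ (p - 2) * fd 1)) (x / 2) with hc
  have hc0 : 0 < c :=
    lt_min (by linarith [h.flux_neg hp (hg 1 zero_le_one) one_pos]) (by linarith)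
  have hflux : ∀ r, 1 ≤ r → |fd r| ^ (p - 2) * fd r ≤ -c := by
    intro r hr
    refine image_le_of_deriv_right_lt_deriv_boundary' (f := fun s => |fd s| ^ (p - 2) * fd s)
      (f' := gd) (B := fun _ => -c) (B' := fun _ => 0) (a := 1) (b := r)
      (h.contG.mono fun s hs => zero_le_one.trans hs.1) ?_ ?_ continuousOn_const ?_ ?_
      ⟨hr, le_rfl⟩
    · intro s hs
      exact (h.hasDerivAt_flux (one_pos.trans_le hs.1)).hasDerivWithinAt
    · linarith [min_le_left (-(|fd 1| ^ (p - 2) * fd 1)) (x / 2)]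
    · intro s _
      exact hasDerivWithinAt_const _ _ _
    · intro s hs h0
      have hs0 : 0 ≤ s := zero_le_one.trans hs.1
      rw [h.eqn hp hs0, h0, abs_neg, abs_of_pos hc0]
      linarith [hcon s hs0, min_le_right (-(|fd 1| ^ (p - 2) * fd 1)) (x / 2)]
  set d := c ^ (1 / (p - 1)) with hd
  have hd0 : 0 < d := Real.rpow_pos_of_pos hc0 _
  have hfd : ∀ r, 1 ≤ r → fd r ≤ -d := by
    intro r hr
    have h1 := hflux r hr
    have hneg := h.fd_neg hp (hg r (by linarith)) (by linarith)
    have h2 : c ≤ |fd r| ^ (p - 1) := by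
      rw [← abs_flux hp, abs_of_nonpos (by linarith)]; linarith
    have h3 := Real.rpow_le_rpow hc0.le h2 (show 0 ≤ 1 / (p - 1) from
      one_div_nonneg.2 (by linarith))
    rw [← Real.rpow_mul (abs_nonneg _), mul_one_div_cancel (by linarith), Real.rpow_one,
      abs_of_neg hneg] at h3
    linarith
  have hanti : AntitoneOn (fun s => f s + d * s) (Ici 1) := by
    have hder : ∀ s ∈ interior (Ici (1 : ℝ)), HasDerivAt (fun s => f s + d * s) (fd s + d) s := by
      intro s hs
      rw [interior_Ici] at hs
      have hs : 1 < s := hs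
      refine ((h.hasDerivAt (by linarith)).add ((hasDerivAt_id s).const_mul d)).congr_deriv ?_
      ring
    apply antitoneOn_of_deriv_nonpos (convex_Ici 1)
    · exact (h.contF.mono (Ici_subset_Ici.2 zero_le_one)).add (by fun_prop)
    · intro s hs
      exact (hder s hs).differentiableAt.differentiableWithinAt
    · intro s hs
      rw [(hder s hs).deriv]
      rw [interior_Ici] at hs
      linarith [hfd s (le_of_lt hs)]
  have hf1 := hx.trans (hcon 1 zero_le_one)
  have hle : (1 : ℝ) ≤ 1 + f 1 / d := by linarith [div_pos hf1 hd0]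
  have h1 := hanti (mem_Ici.2 le_rfl) (mem_Ici.2 hle) hle
  have h2 := hcon (1 + f 1 / d) (by linarith)
  simp only at h1
  rw [mul_add, mul_div_cancel₀ _ hd0.ne'] at h1
  linarith

lemma IsSol.exists_eq (hp : 1 < p) (h : IsSol p a f fd gd) {x : ℝ} (hx : 0 < x) (hxa : x ≤ a) :
    ∃ r, Good f r ∧ f r = x := by
  obtain ⟨r, hr0, hr⟩ := h.exists_le hp hx
  have hf0 : f 0 = a := h.2.2.2.2.2.1
  -- take the first time at which `f ≤ x`
  have hcomp : IsCompact (Icc 0 r ∩ f ⁻¹' Iic x) :=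
    isCompact_Icc.of_isClosed_subset
      ((h.contF.mono Icc_subset_Ici_self).preimage_isClosed_of_isClosed isClosed_Icc isClosed_Iic)
      inter_subset_left
  obtain ⟨s, ⟨hs, hsx⟩, hleast⟩ := hcomp.exists_isLeast ⟨r, ⟨hr0, le_rfl⟩, hr⟩
  have hsx : f s ≤ x := hsx
  obtain ⟨t, ht, htx⟩ := intermediate_value_Icc' hs.1 (h.contF.mono Icc_subset_Ici_self)
    ⟨hsx, by rw [hf0]; exact hxa⟩
  have hst : s = t := le_antisymm (hleast ⟨⟨ht.1, ht.2.trans hs.2⟩, htx.le⟩) ht.2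
  subst hst
  refine ⟨s, ⟨hs.1, fun u hu => ?_⟩, htx⟩
  by_contra! hu0
  have : s = u := le_antisymm (hleast ⟨⟨hu.1, hu.2.trans hs.2⟩, hu0.trans hx.le⟩) hu.2
  rw [← this, htx] at hu0
  linarith

/-- Along a solution, `|f'|^p` as a function of the height `f` is a phase curve. -/
lemma IsSol.phaseCurve (hp : 1 < p) (ha : 0 < a) (h : IsSol p a f fd gd) {V : ℝ → ℝ}
    (hV : ∀ r, Good f r → V (f r) = |fd r| ^ p) : PhaseCurve p a V := by
  have hp10 : 0 < p - 1 := by linarith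
  have hf0 : f 0 = a := h.2.2.2.2.2.1
  have hfd0 : fd 0 = 0 := h.2.2.2.2.2.2
  have hg0 : Good f 0 := ⟨le_rfl, fun s hs => by
    rw [le_antisymm hs.2 hs.1, hf0]; exact ha⟩
  have hzero : V a = 0 := by
    rw [← hf0, hV 0 hg0, hfd0, abs_zero, Real.zero_rpow (by linarith)]
  have hnonneg : ∀ x ∈ Ioc 0 a, 0 ≤ V x := by
    intro x hx
    obtain ⟨r, hr, rfl⟩ := h.exists_eq hp hx.1 hx.2
    rw [hV r hr]; positivity
  have hode : ∀ x ∈ Ioo 0 a, HasDerivAt V (p / (p - 1) * (V x ^ ((p - 1) / p) - x)) x := by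
    intro x hx
    obtain ⟨r, hr, rfl⟩ := h.exists_eq hp hx.1 hx.2.le
    have hr0 : 0 < r := by
      refine lt_of_le_of_ne hr.1 fun h0 => ?_
      rw [← h0, hf0] at hx
      exact lt_irrefl _ hx.2
    obtain ⟨η, hη, hgη⟩ := hr.exists_gt h.contF
    have hnear : ∀ᶠ s in 𝓝 r, 0 < s ∧ Good f s := by
      filter_upwards [Ioo_mem_nhds hr0 (lt_add_of_pos_right r hη)] with s hs
      exact ⟨hs.1, hgη.mono hs.1.le hs.2.le⟩
    have hneg := h.fd_neg hp hr hr0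
    have hstrict : HasStrictDerivAt f (fd r) r :=
      hasStrictDerivAt_of_hasDerivAt_of_continuousAt
        (hnear.mono fun s hs => h.hasDerivAt hs.1) (h.2.1.continuousAt (Ici_mem_nhds hr0))
    have hflux := h.flux_neg hp hr hr0
    have hcomp : HasDerivAt (fun s => (-(|fd s| ^ (p - 2) * fd s)) ^ (p / (p - 1)))
        (-gd r * (p / (p - 1)) * (-(|fd r| ^ (p - 2) * fd r)) ^ (p / (p - 1) - 1)) r :=
      (h.hasDerivAt_flux hr0).neg.rpow_const (Or.inl (neg_pos.2 hflux).ne')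
    have hpow : ∀ s, 0 < s → Good f s →
        -(|fd s| ^ (p - 2) * fd s) = |fd s| ^ (p - 1) := by
      intro s hs0 hs
      rw [← abs_flux hp, abs_of_neg (h.flux_neg hp hs hs0)]
    have hVf : HasDerivAt (fun s => V (f s))
        (-gd r * (p / (p - 1)) * (-(|fd r| ^ (p - 2) * fd r)) ^ (p / (p - 1) - 1)) r := by
      refine hcomp.congr_of_eventuallyEq (hnear.mono fun s hs => ?_)
      simp only
      rw [hV s hs.2, hpow s hs.1 hs.2, ← Real.rpow_mul (abs_nonneg _),
        mul_div_cancel₀ _ hp10.ne']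
    -- differentiate `V = (V ∘ f) ∘ f⁻¹` with the local inverse of `f` at `r`
    have hinv := (hstrict.to_localInverse hneg.ne).hasDerivAt
    have hfix : hstrict.localInverse f (fd r) r hneg.ne (f r) = r :=
      HasStrictFDerivAt.localInverse_apply_image _
    have hV' := HasDerivAt.comp (f r) (by rw [hfix]; exact hVf) hinv
    have hVx : HasDerivAt V
        (-gd r * (p / (p - 1)) * (-(|fd r| ^ (p - 2) * fd r)) ^ (p / (p - 1) - 1) * (fd r)⁻¹)
        (f r) := by
      refine hV'.congr_of_eventuallyEq ?_
      have hri : ∀ᶠ y in 𝓝 (f r), f (hstrict.localInverse f (fd r) r hneg.ne y) = y :=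
        HasStrictFDerivAt.eventually_right_inverse _
      filter_upwards [hri] with y hy
      simp only [Function.comp_apply, hy]
    refine hVx.congr_deriv ?_
    rw [h.eqn hp hr0.le, abs_flux hp, hpow r hr0 hr, hV r hr, ← Real.rpow_mul (abs_nonneg _),
      ← Real.rpow_mul (abs_nonneg _), mul_div_cancel₀ _ (by linarith : p ≠ 0)]
    rw [show (p - 1) * (p / (p - 1) - 1) = 1 by field_simp; ring, Real.rpow_one,
      abs_of_neg hneg]
    field_simp [hneg.ne]
  refine ⟨hzero, hnonneg, ?_, hode⟩
  intro x hx
  rcases hx.2.lt_or_eq with hlt | rfl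
  · exact (hode x ⟨hx.1, hlt⟩).continuousAt.continuousWithinAt
  -- at the starting height, continuity comes from `f' → 0` as `r → 0`
  rw [Metric.continuousWithinAt_iff']
  intro ε hε
  obtain ⟨η, hη, hgη⟩ := hg0.exists_gt h.contF
  rw [zero_add] at hgη
  have hsmall : ∀ᶠ s in 𝓝[≥] (0 : ℝ), |fd s| ^ p < ε := by
    have hc : ContinuousWithinAt (fun s => |fd s| ^ p) (Ici 0) 0 :=
      ((h.2.1 0 self_mem_Ici).abs).rpow_const (Or.inr (by linarith))
    apply hc.tendsto.eventually (gt_mem_nhds _)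
    rw [hfd0, abs_zero, Real.zero_rpow (by linarith)]; exact hε
  obtain ⟨u, hu, hsub⟩ := (mem_nhdsGE_iff_exists_Icc_subset).1 hsmall
  have hu : 0 < u := hu
  set v := min u η with hv
  have hv0 : 0 < v := lt_min hu hη
  have hgv : Good f v := hgη.mono hv0.le (min_le_right _ _)
  have hfv : f v < x := by
    rw [← hf0]; exact h.strictAntiOn hp hgv ⟨le_rfl, hv0.le⟩ ⟨hv0.le, le_rfl⟩ hv0
  filter_upwards [mem_nhdsWithin_of_mem_nhds (Ioi_mem_nhds hfv), self_mem_nhdsWithin] with y hy hyx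
  obtain ⟨s, hs, rfl⟩ := intermediate_value_Icc' hv0.le (h.contF.mono Icc_subset_Ici_self)
    ⟨le_of_lt hy, by rw [hf0]; exact hyx.2⟩
  rw [hzero, Real.dist_eq, sub_zero, hV s (hgv.mono hs.1 hs.2), abs_of_nonneg (by positivity)]
  exact hsub ⟨hs.1, hs.2.trans (min_le_left _ _)⟩

end Solution

/-- In the variable `x = a(1-y)` the quotient `ψ(y)(1-y)^(-p)` is `V(x) x^(-p)`. -/
lemma tendsto_iff_decays {p a : ℝ} (ha : 0 < a) (ψ : ℝ → ℝ) :
    Tendsto (fun y => ψ y * (1 - y) ^ (-p)) (𝓝[<] (1 : ℝ)) (𝓝 0) ↔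
      Decays p (fun x => a ^ p * ψ (1 - x / a)) := by
  have hkey : ∀ y : ℝ, y < 1 →
      a ^ p * ψ (1 - a * (1 - y) / a) * (a * (1 - y)) ^ (-p) = ψ y * (1 - y) ^ (-p) := by
    intro y hy
    have hy' : 0 < 1 - y := by linarith
    rw [mul_div_cancel_left₀ _ ha.ne', sub_sub_cancel, Real.mul_rpow ha.le hy'.le,
      Real.rpow_neg ha.le]
    have := (Real.rpow_pos_of_pos ha p).ne'
    field_simp
  constructor
  · intro h
    have hmap : Tendsto (fun x : ℝ => 1 - x / a) (𝓝[>] 0) (𝓝[<] 1) := by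
      apply tendsto_nhdsWithin_of_tendsto_nhds_of_eventually_within
      · have hc : ContinuousAt (fun x : ℝ => 1 - x / a) 0 := by fun_prop
        have := hc.tendsto.mono_left (nhdsWithin_le_nhds (s := Ioi 0))
        simpa using this
      · filter_upwards [self_mem_nhdsWithin] with x hx
        have := div_pos (mem_Ioi.1 hx) ha
        simp only [mem_Iio]; linarith
    refine (h.comp hmap).congr' ?_
    filter_upwards [self_mem_nhdsWithin] with x hx
    have hpos := div_pos (mem_Ioi.1 hx) ha
    simp only [Function.comp_apply]
    rw [← hkey _ (by linarith), sub_sub_cancel, mul_div_cancel₀ _ ha.ne']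
  · intro h
    have hmap : Tendsto (fun y : ℝ => a * (1 - y)) (𝓝[<] 1) (𝓝[>] 0) := by
      apply tendsto_nhdsWithin_of_tendsto_nhds_of_eventually_within
      · have hc : ContinuousAt (fun y : ℝ => a * (1 - y)) 1 := by fun_prop
        have := hc.tendsto.mono_left (nhdsWithin_le_nhds (s := Iio 1))
        simpa using this
      · filter_upwards [self_mem_nhdsWithin] with y hy
        have : y < 1 := hy
        exact mul_pos ha (by linarith)
    refine (h.comp hmap).congr' ?_
    filter_upwards [self_mem_nhdsWithin] with y hy
    exact hkey y hy

/-- There exists `a_* > 0` such that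
`𝒞 := {a > 0 : ψ(y,a)(1-y)^{-p} → 0 as y → 1}` equals the open interval `(0,a_*)`. -/
theorem stmt12 (p : ℝ) (hp : p ∈ Set.Ioo (1:ℝ) 2)
    (f fd gd ψ : ℝ → ℝ → ℝ)
    (hf : ∀ a, 0 < a → IsSol p a (f a) (fd a) (gd a))
    (hrel : ∀ a, 0 < a → PsiRel p a (f a) (fd a) (ψ a)) :
    ∃ astar : ℝ, 0 < astar ∧
      {a : ℝ | 0 < a ∧
        Tendsto (fun y => ψ a y * (1-y) ^ (-p)) (𝓝[<] (1:ℝ)) (𝓝 0)} = Set.Ioo 0 astar := by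
  have hV : ∀ a, 0 < a → PhaseCurve p a (fun x => a ^ p * ψ a (1 - x / a)) := by
    intro a ha
    refine (hf a ha).phaseCurve hp.1 ha fun r hr => ?_
    rw [hrel a ha r hr.1 (hr.lt_extTime (hf a ha).contF),
      mul_div_cancel₀ _ (Real.rpow_pos_of_pos ha p).ne']
  obtain ⟨astar, hpos, heq⟩ := decays_set_eq hp hV
  refine ⟨astar, hpos, ?_⟩
  rw [← heq]
  ext a
  exact and_congr_right fun ha => tendsto_iff_decays ha (ψ a)
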